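/- arXiv:1708.07209 — 2 statements merged into one kernel-verified Lean document; each statement's English description precedes it below -/
import Mathlib

section
/- Let A be a synchronous transducer on X_n synchronizing at level k such that every state of A is a homeomorphism state. Then f_A : X_n^ℤ → X_n^ℤ is surjective. -/
/-!
The proof is a compactness argument. Given a target `y : ℤ → X` and `N : ℕ`, process the tail of
`y` starting at position `-N` from the state `q0`: since `q0` induces a surjection on one-sided
sequences, some `x` is mapped onto that tail, and once `k` letters have been read synchronization
makes the current state the forced one, so `zmap` of `x` agrees with `y` on `[-N + k, ∞)`
(`Transducer.exists_zmap_eq_of_le`). The sets of `x` with this property for a given `N` are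
nonempty, closed since `zmap` is continuous, and decreasing in `N`; as the full shift is compact,
they have a common point, which is a preimage of `y`.
-/

/-- A synchronous transducer with alphabet `X` and state set `Q`:
`step x q` is the state reached after reading letter `x` at state `q`, and
`out x q` is the letter written. -/
structure Transducer (X : Type*) (Q : Type*) where
  step : X → Q → Q
  out : X → Q → X

namespace Transducer

variable {X Q R : Type*}

/-- The transition function extended to words (read left to right). -/
def stepW (T : Transducer X Q) : List X → Q → Q
  | [], q => q
  | x :: w, q => T.stepW w (T.step x q)

/-- The output function extended to words. -/
def outW (T : Transducer X Q) : List X → Q → List X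
  | [], _ => []
  | x :: w, q => T.out x q :: T.outW w (T.step x q)

theorem stepW_append (T : Transducer X Q) (u v : List X) (q : Q) :
    T.stepW (u ++ v) q = T.stepW v (T.stepW u q) := by
  induction u generalizing q with
  | nil => rfl
  | cons x u ih => simpa [stepW] using ih (T.step x q)

/-- `T` is synchronizing at level `k`: the state reached after reading any word of
length `k` is independent of the starting state. -/
def Synchronizing (T : Transducer X Q) (k : ℕ) : Prop :=
  ∀ Γ : List X, Γ.length = k → ∀ p q : Q, T.stepW Γ p = T.stepW Γ q

/-- A state is in the core of `T` if it is forced by some nonempty word. -/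
def InCore (T : Transducer X Q) (q : Q) : Prop :=
  ∃ Γ : List X, Γ ≠ [] ∧ ∀ p : Q, T.stepW Γ p = q

/-- `T` is core if every state is forced. -/
def IsCore (T : Transducer X Q) : Prop := ∀ q : Q, T.InCore q

/-- The map on one-sided infinite sequences induced by the state `q`. -/
def stateMap (T : Transducer X Q) (q : Q) (x : ℕ → X) : ℕ → X :=
  fun i => T.out (x i) (T.stepW ((List.range i).map x) q)

/-- Every state of `T` is a homeomorphism state. -/
def AllHomeo (T : Transducer X Q) : Prop := ∀ q : Q, Function.Bijective (T.stateMap q)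

/-- `T` is invertible: every state acts as a bijection on single letters. -/
def Invertible (T : Transducer X Q) : Prop :=
  ∀ q : Q, Function.Bijective fun x => T.out x q

/-- The map `f_T` on bi-infinite sequences induced by a transducer synchronizing at
level `k`; the letter at position `i` of the image is obtained by processing `x i`
from the state reached after reading `x (i-k), …, x (i-1)` starting at the basepoint
state `q0` (when `T` is synchronizing at level `k` this is the forced state, and the
map does not depend on the choice of `q0`). -/
def zmap (T : Transducer X Q) (k : ℕ) (q0 : Q) (x : ℤ → X) : ℤ → X :=
  fun i => T.out (x i) (T.stepW ((List.range k).map fun j => x (i - (k : ℤ) + (j : ℤ))) q0)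

/-- The composite map on one-sided sequences represented by a word of states,
applied leftmost letter first. -/
def wordMap (T : Transducer X Q) : List Q → (ℕ → X) → ℕ → X
  | [], x => x
  | q :: w, x => T.wordMap w (T.stateMap q x)

/-- A bi-infinite sequence is rational if it is eventually periodic in both directions. -/
def IsRational (z : ℤ → X) : Prop :=
  ∃ (N p q : ℕ), 0 < p ∧ 0 < q ∧
    (∀ i : ℤ, (N : ℤ) ≤ i → z (i + (p : ℤ)) = z i) ∧
    (∀ i : ℤ, i ≤ -(N : ℤ) → z (i - (q : ℤ)) = z i)

/-- The inverse transducer of an invertible transducer. -/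
noncomputable def invT (T : Transducer X Q) (hX : Nonempty X) : Transducer X Q where
  step := fun y q => T.step (@Function.invFun X X hX (fun x => T.out x q) y) q
  out := fun y q => @Function.invFun X X hX (fun x => T.out x q) y

/-- The product transducer `A*B`. -/
def prodT (T : Transducer X Q) (S : Transducer X R) : Transducer X (Q × R) where
  step := fun x pq => (T.step x pq.1, S.step (T.out x pq.1) pq.2)
  out := fun x pq => S.out (T.out x pq.1) pq.2

/-- The `m`-fold power `A^m`, with state set `Q^m`. -/
def powT (T : Transducer X Q) : (m : ℕ) → Transducer X (Fin m → Q)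
  | 0 => { step := fun _ u => u, out := fun x _ => x }
  | m + 1 =>
    { step := fun x u =>
        Fin.cons (T.step x (u 0)) ((T.powT m).step (T.out x (u 0)) fun i => u i.succ)
      out := fun x u => (T.powT m).out (T.out x (u 0)) fun i => u i.succ }

/-- The restriction of a transducer to its core. -/
def coreT (T : Transducer X Q) : Transducer X {q : Q // T.InCore q} where
  step := fun x q =>
    ⟨T.step x q.1, by
      obtain ⟨Γ, hΓ, h⟩ := q.2
      exact ⟨Γ ++ [x], by simp, fun p => by rw [T.stepW_append, h p]; rfl⟩⟩
  out := fun x q => T.out x q.1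

/-- `Γ_l^P`: the word obtained by passing `Γ` successively through the states in `P`. -/
def iterW (T : Transducer X Q) : List Q → List X → List X
  | [], Γ => Γ
  | p :: P, Γ => T.iterW P (T.outW Γ p)

/-- The list of states `out_i^P` reached when passing `Γ` successively through `P`. -/
def iterOuts (T : Transducer X Q) : List Q → List X → List Q
  | [], _ => []
  | p :: P, Γ => T.stepW Γ p :: T.iterOuts P (T.outW Γ p)

/-- `((t :: Tt), (p :: Tp), Γ)` is a split (forced states computed from the
basepoint state `q0`). -/
def SplitCond (T : Transducer X Q) (q0 : Q) (t p : Q) (Tt Tp : List Q) (Γ : List X) : Prop :=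
  Tt.length = Tp.length ∧
  T.iterOuts (t :: Tt) Γ = T.iterOuts (p :: Tp) Γ ∧
  (∀ i : ℕ, 1 ≤ i → i < (t :: Tt).length →
    T.stepW (T.iterW ((t :: Tt).take i) Γ) q0 = T.stepW (T.iterW ((p :: Tp).take i) Γ) q0) ∧
  T.stepW (T.iterW (t :: Tt) Γ) q0 ≠ T.stepW (T.iterW (p :: Tp) Γ) q0

/-- The bottom of the split `((t :: Tt), (p :: Tp), Γ)` depends only on its top. -/
def DependsOnTop (T : Transducer X Q) (q0 : Q) (t p : Q) (Tt Tp : List Q) (Γ : List X) : Prop :=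
  ∀ U U' : List Q, U.length = Tt.length → U'.length = Tp.length →
    T.iterOuts (t :: U) Γ = T.iterOuts (t :: Tt) Γ ∧
    T.iterOuts (p :: U') Γ = T.iterOuts (p :: Tp) Γ ∧
    T.stepW (T.iterW (t :: U) Γ) q0 = T.stepW (T.iterW (t :: Tt) Γ) q0 ∧
    T.stepW (T.iterW (p :: U') Γ) q0 = T.stepW (T.iterW (p :: Tp) Γ) q0

/-- The edge relation of the graph of bad pairs `G_r(T)` (on unordered pairs of
states, modelled as subsets of `Q`). -/
def BadEdge (T : Transducer X Q) (q0 : Q) (r : ℕ) (v w : Set Q) : Prop :=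
  ∃ (t p : Q) (Tt Tp : List Q) (Γ : List X), Γ.length = r ∧
    T.SplitCond q0 t p Tt Tp Γ ∧ T.DependsOnTop q0 t p Tt Tp Γ ∧
    v = {t, p} ∧
    w = {T.stepW (T.iterW (t :: Tt) Γ) q0, T.stepW (T.iterW (p :: Tp) Γ) q0}

/-- The `r` splitting length of `T`, as an extended natural number (`⊤` if no split
at level `r` exists). -/
noncomputable def splittingLength (T : Transducer X Q) (q0 : Q) (r : ℕ) : ℕ∞ :=
  sInf {L : ℕ∞ | ∃ (t p : Q) (Tt Tp : List Q) (Γ : List X),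
    Γ.length = r ∧ L = ((Tt.length + 1 : ℕ) : ℕ∞) ∧ T.SplitCond q0 t p Tt Tp Γ}

/-- The `i`-th rotation of a word. -/
def rotWord (i : ℕ) (Γ : List X) : List X :=
  Γ.drop (Γ.length - i) ++ Γ.take (Γ.length - i)

/-- A nonempty word is prime if it is not a proper power of a shorter word. -/
def IsPrimeWord (Γ : List X) : Prop :=
  Γ ≠ [] ∧ ∀ (δ : List X) (m : ℕ), 2 ≤ m → Γ ≠ (List.replicate m δ).flatten

/-- The length of the orbit of `Γ` under `f`. -/
noncomputable def orbitLen (f : List X → List X) (Γ : List X) : ℕ :=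
  (Set.range fun m : ℕ => f^[m] Γ).ncard

/-- The minimal `s ≥ 1` such that `f^[s] Γ` is a rotation of `Γ`
(for words of length `k`). -/
noncomputable def sigmaIdx (f : List X → List X) (k : ℕ) (Γ : List X) : ℕ :=
  sInf {s : ℕ | 1 ≤ s ∧ ∃ i < k, f^[s] Γ = rotWord i Γ}

/-- The rotation index attained at the minimal exponent `sigmaIdx`. -/
noncomputable def rhoIdx (f : List X → List X) (k : ℕ) (Γ : List X) : ℕ :=
  sInf {i : ℕ | i < k ∧ f^[sigmaIdx f k Γ] Γ = rotWord i Γ}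

end Transducer

namespace Transducer

theorem continuous_stepW {X Q Z : Type*} [TopologicalSpace X] [DiscreteTopology X]
    [TopologicalSpace Q] [DiscreteTopology Q] [TopologicalSpace Z] (T : Transducer X Q)
    (L : List ℕ) (f : ℕ → Z → X) (hf : ∀ j, Continuous (f j)) (q : Z → Q) (hq : Continuous q) :
    Continuous fun z => T.stepW (L.map fun j => f j z) (q z) := by
  induction L generalizing q with
  | nil => exact hq
  | cons a L ih =>
    have h : Continuous fun p : X × Q => T.step p.1 p.2 := continuous_of_discreteTopology
    exact ih _ (h.comp ((hf a).prodMk hq))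

/-- In `zmap` the list `List.range k` is coerced to a list of integers; here the coercion is moved
inside the mapped function. -/
theorem zmap_apply {X Q : Type*} (T : Transducer X Q) (k : ℕ) (q0 : Q) (x : ℤ → X) (i : ℤ) :
    T.zmap k q0 x i =
      T.out (x i) (T.stepW ((List.range k).map fun j : ℕ => x (i - (k : ℤ) + (j : ℤ))) q0) := by
  have h : (do let a ← List.range k; pure (a : ℤ)) = (List.range k).map fun a : ℕ => (a : ℤ) :=
    List.flatMap_pure_eq_map _ _
  simp only [zmap, h, List.map_map]
  rfl

theorem continuous_zmap_apply {X Q : Type*} [TopologicalSpace X] [DiscreteTopology X]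
    (T : Transducer X Q) (k : ℕ) (q0 : Q) (i : ℤ) : Continuous fun x => T.zmap k q0 x i := by
  let _ : TopologicalSpace Q := ⊥
  have _ : DiscreteTopology Q := ⟨rfl⟩
  have h : Continuous fun p : X × Q => T.out p.1 p.2 := continuous_of_discreteTopology
  simp only [zmap_apply]
  exact h.comp ((continuous_apply i).prodMk
    (T.continuous_stepW (List.range k) (fun j (x : ℤ → X) => x (i - (k : ℤ) + (j : ℤ)))
      (fun j => continuous_apply _) (fun _ => q0) continuous_const))

/-- After reading at least `k` letters, the state depends only on the last `k` of them. -/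
theorem Synchronizing.stepW_range_add {X Q : Type*} {T : Transducer X Q} {k : ℕ}
    (h : T.Synchronizing k) (z : ℕ → X) (m : ℕ) (p q : Q) :
    T.stepW ((List.range (m + k)).map z) p =
      T.stepW ((List.range k).map fun j => z (m + j)) q := by
  rw [List.range_add, List.map_append, stepW_append, List.map_map]
  exact h _ (by simp) _ _

theorem exists_zmap_eq_of_le {X Q : Type*} {T : Transducer X Q} {k : ℕ} (q0 : Q)
    (hs : T.Synchronizing k) (hq : Function.Surjective (T.stateMap q0)) (y : ℤ → X) (N : ℕ) :
    ∃ x, ∀ i : ℤ, -(N : ℤ) + k ≤ i → T.zmap k q0 x i = y i := by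
  obtain ⟨z, hz⟩ := hq fun m => y ((m : ℤ) - N)
  -- The values at positions below `-N` are irrelevant; `Int.toNat` makes them `z 0`.
  refine ⟨fun i => z (i + N).toNat, fun i hi => ?_⟩
  obtain ⟨m, hm⟩ := Int.eq_ofNat_of_zero_le (show 0 ≤ i - (-(N : ℤ) + k) by omega)
  obtain rfl : i = (m : ℤ) + k - N := by omega
  have h := congrFun hz (m + k)
  simp only [stateMap, hs.stepW_range_add z m q0 q0] at h
  have e : ∀ j : ℕ, ((m : ℤ) + k - N - k + j + N).toNat = m + j := fun j => by omega
  have e' : ((m : ℤ) + k - N + N).toNat = m + k := by omega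
  simp only [zmap_apply, e, e', h]
  push_cast
  rfl

end Transducer

/-- Let `A` be a synchronous transducer on `X_n` synchronizing at level
`k` such that every state of `A` is a homeomorphism state.  Then `f_A` is surjective. -/
theorem homeo_states_implies_surjective
    (n : ℕ) (hn : 2 ≤ n) {Q : Type*} [Fintype Q]
    (A : Transducer (Fin n) Q) (k : ℕ) (q0 : Q)
    (hsync : A.Synchronizing k) (hhomeo : A.AllHomeo) :
    Function.Surjective (A.zmap k q0) := by
  intro y
  have hclosed : ∀ N : ℕ,
      IsClosed {x | ∀ i : ℤ, -(N : ℤ) + k ≤ i → A.zmap k q0 x i = y i} := fun N => by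
    simp only [Set.ofPred_forall]
    exact isClosed_iInter fun i => isClosed_iInter fun _ =>
      isClosed_eq (A.continuous_zmap_apply k q0 i) continuous_const
  obtain ⟨x, hx⟩ := IsCompact.nonempty_iInter_of_sequence_nonempty_isCompact_isClosed
    (fun N : ℕ => {x : ℤ → Fin n | ∀ i : ℤ, -(N : ℤ) + k ≤ i → A.zmap k q0 x i = y i})
    (fun N x hx i hi => hx i (by push_cast; omega))
    (fun N => Transducer.exists_zmap_eq_of_le q0 hsync (hhomeo q0).2 y N)
    (hclosed 0).isCompact hclosed
  refine ⟨x, funext fun i => ?_⟩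
  -- The constraint indexed by `N` covers position `i` as soon as `-N + k ≤ i`.
  exact Set.mem_iInter.1 hx (k + i.natAbs) i (by omega)
end

section
/- Let A be a core synchronous transducer on X_n synchronizing at some level, let l ≥ 1, and suppose \overline{A}_l is a bijection of X_n^l whose orbit C through a prime word Γ_0 ∈ X_n^l consists of prime words. Let s ≥ 1 be minimal such that \overline{A}_l^s(Γ_0) is a rotation of Γ_0 and let 0 ≤ r < l be the unique index with \overline{A}_l^s(Γ_0) equal to the r-th rotation of Γ_0. Then: (i) for every word Γ ∈ C, the corresponding minimal exponent s and rotation index r computed at Γ coincide with those computed at Γ_0; (ii) |C| = o·s, where o is the least positive integer with o·r ≡ 0 (mod l). -/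
/-! ### Words processed by a synchronizing transducer -/

namespace Transducer

variable {X Q : Type*}

theorem outW_append (T : Transducer X Q) (u v : List X) (q : Q) :
    T.outW (u ++ v) q = T.outW u q ++ T.outW v (T.stepW u q) := by
  induction u generalizing q with
  | nil => rfl
  | cons x u ih => simpa [stepW, outW] using ih (T.step x q)

theorem length_outW (T : Transducer X Q) (u : List X) (q : Q) :
    (T.outW u q).length = u.length := by
  induction u generalizing q with
  | nil => rfl
  | cons x u ih => simpa [outW] using ih (T.step x q)

theorem Synchronizing.stepW_eq {T : Transducer X Q} {k : ℕ} (h : T.Synchronizing k)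
    {w : List X} (hw : k ≤ w.length) (p q : Q) : T.stepW w p = T.stepW w q := by
  rw [← List.take_append_drop k w, stepW_append, stepW_append,
    h (w.take k) (by simpa using hw) p q]

theorem stepW_replicate_flatten (T : Transducer X Q) {w : List X} {q : Q}
    (h : T.stepW w q = q) (m : ℕ) : T.stepW (List.replicate m w).flatten q = q := by
  induction m with
  | zero => rfl
  | succ m ih => rw [List.replicate_succ, List.flatten_cons, stepW_append, h, ih]

theorem Synchronizing.fixed_unique {T : Transducer X Q} {k : ℕ} (h : T.Synchronizing k)
    {w : List X} (hw : w ≠ []) {p q : Q} (hp : T.stepW w p = p) (hq : T.stepW w q = q) :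
    p = q := by
  rw [← T.stepW_replicate_flatten hp k, ← T.stepW_replicate_flatten hq k]
  refine h.stepW_eq ?_ p q
  have : 0 < w.length := List.length_pos_iff.2 hw
  simpa using Nat.le_mul_of_pos_right k this

/-- If `q` is the state fixed by `u ++ v`, the one fixed by `v ++ u` is `T.stepW u q`. -/
theorem barA_swap {T : Transducer X Q} {k : ℕ} (h : T.Synchronizing k)
    {f : List X → List X}
    (hf : ∀ w : List X, w ≠ [] → ∃ q : Q, T.stepW w q = q ∧ f w = T.outW w q)
    (u v : List X) (huv : u ++ v ≠ []) :
    f (v ++ u) = (f (u ++ v)).rotate u.length := by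
  obtain ⟨q, hq, hfq⟩ := hf _ huv
  have hvu : v ++ u ≠ [] := by
    simp only [ne_eq, List.append_eq_nil_iff] at huv ⊢
    tauto
  obtain ⟨p, hp, hfp⟩ := hf _ hvu
  rw [stepW_append] at hq
  have hpq : p = T.stepW u q :=
    h.fixed_unique hvu hp (by rw [stepW_append, hq])
  rw [hfq, hfp, hpq, outW_append, outW_append, hq]
  conv_rhs => rw [← T.length_outW u q, List.rotate_append_length_eq]

/-- The map `barA` commutes with rotations of nonempty words. -/
theorem barA_rotate {T : Transducer X Q} {k : ℕ} (h : T.Synchronizing k)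
    {f : List X → List X}
    (hf : ∀ w : List X, w ≠ [] → ∃ q : Q, T.stepW w q = q ∧ f w = T.outW w q)
    (w : List X) (hw : w ≠ []) (i : ℕ) (hi : i ≤ w.length) :
    f (w.rotate i) = (f w).rotate i := by
  have := barA_swap h hf (w.take i) (w.drop i) (by simpa using hw)
  rw [List.take_append_drop, List.length_take, min_eq_left hi] at this
  rw [List.rotate_eq_drop_append_take hi, this]

/-! ### Rotations and prime words -/

theorem rotWord_eq_rotate (i : ℕ) (w : List X) : rotWord i w = w.rotate (w.length - i) := by
  rw [rotWord, List.rotate_eq_drop_append_take (Nat.sub_le _ _)]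

/-- Iterates of `w ↦ w.rotate 1`: in this form rotations are subject to the theory of
periodic points. -/
theorem iterate_rotate_one (w : List X) (i : ℕ) :
    (fun w : List X => w.rotate 1)^[i] w = w.rotate i := by
  induction i with
  | zero => simp
  | succ i ih => rw [Function.iterate_succ_apply', ih, List.rotate_rotate]

theorem eq_replicate_of_commute {u : List X} (m : ℕ) (v : List X)
    (hv : v.length = m * u.length) (h : v ++ u = u ++ v) :
    v = (List.replicate m u).flatten := by
  induction m generalizing v with
  | zero => simpa using hv
  | succ m ih =>
    have hpre : u <+: v := by
      have h1 : u <+: v ++ u := h ▸ List.prefix_append u v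
      exact List.prefix_of_prefix_length_le h1 (List.prefix_append v u) (by rw [hv]; nlinarith)
    obtain ⟨v', rfl⟩ := hpre
    rw [List.replicate_succ, List.flatten_cons, ← ih v']
    · rw [List.length_append, Nat.succ_mul] at hv
      omega
    · rw [List.append_assoc] at h
      exact List.append_cancel_left h

/-- A prime word is fixed only by rotations by a multiple of its length: otherwise it is a power
of its prefix of length the gcd of its length and the rotation amount. -/
theorem IsPrimeWord.dvd_of_rotate_eq {w : List X} (hw : IsPrimeWord w) {k : ℕ}
    (h : w.rotate k = w) : w.length ∣ k := by
  have hg : Function.IsPeriodicPt (fun w : List X => w.rotate 1) (w.length.gcd k) w :=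
    Function.IsPeriodicPt.gcd
      (by rw [Function.IsPeriodicPt, Function.IsFixedPt, iterate_rotate_one, List.rotate_length])
      (by rw [Function.IsPeriodicPt, Function.IsFixedPt, iterate_rotate_one, h])
  rw [Function.IsPeriodicPt, Function.IsFixedPt, iterate_rotate_one] at hg
  have hpos : 0 < w.length := List.length_pos_iff.2 hw.1
  obtain ⟨m, hm⟩ := Nat.gcd_dvd_left w.length k
  have hdk := Nat.gcd_dvd_right w.length k
  generalize w.length.gcd k = d at hg hm hdk
  rcases m with _ | _ | m
  · omega
  · rwa [hm, zero_add, mul_one]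
  · exfalso
    have hd : d ≤ w.length := by rw [hm]; exact Nat.le_mul_of_pos_right d (by omega)
    have hlen : (w.take d).length = d := by simpa using hd
    rw [List.rotate_eq_drop_append_take hd] at hg
    refine hw.2 (w.take d) (m + 1 + 1) (by omega) ?_
    rw [List.replicate_succ, List.flatten_cons, ← eq_replicate_of_commute (m + 1) (w.drop d),
      List.take_append_drop]
    · rw [hlen, List.length_drop, hm, Nat.mul_succ, Nat.add_sub_cancel, Nat.mul_comm]
    · rw [hg, List.take_append_drop]

end Transducer

/-! ### Orbits -/

theorem ncard_range_iterate {α : Type*} (f : α → α) (x : α)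
    (hx : 0 < Function.minimalPeriod f x) :
    (Set.range fun m : ℕ => f^[m] x).ncard = Function.minimalPeriod f x := by
  have : (Set.range fun m : ℕ => f^[m] x) =
      (fun m : ℕ => f^[m] x) '' Set.Iio (Function.minimalPeriod f x) := by
    ext y
    constructor
    · rintro ⟨m, rfl⟩
      exact ⟨m % Function.minimalPeriod f x, Nat.mod_lt _ hx,
        Function.iterate_mod_minimalPeriod_eq⟩
    · rintro ⟨m, -, rfl⟩
      exact ⟨m, rfl⟩
  rw [this, Set.InjOn.ncard_image Function.iterate_injOn_Iio_minimalPeriod]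
  rw [← Finset.coe_Iio, Set.ncard_coe_finset, Nat.card_Iio]

/-- Let `A` be a core synchronous synchronizing transducer on `X_n`,
`l ≥ 1`, and suppose `\overline{A}_l` is a bijection of `X_n^l` whose orbit `C` through
a prime word `Γ₀` consists of prime words.  Let `s ≥ 1` be minimal with
`\overline{A}_l^s(Γ₀)` a rotation of `Γ₀`, the `r`-th rotation.  Then (i) the same
minimal exponent `s` and rotation index `r` are attained at every word of `C`, and
(ii) `|C| = o · s` where `o` is the least positive integer with `o·r ≡ 0 (mod l)`. -/
theorem rotation_triple_of_cycle
    (n : ℕ) (hn : 2 ≤ n) {Q : Type*} [Fintype Q]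
    (A : Transducer (Fin n) Q) (k0 : ℕ)
    (hcore : A.IsCore) (hsync : A.Synchronizing k0)
    (l : ℕ) (hl : 1 ≤ l)
    (barA : List (Fin n) → List (Fin n))
    (hbarA : ∀ Γ : List (Fin n), Γ ≠ [] →
      ∃ q : Q, A.stepW Γ q = q ∧ barA Γ = A.outW Γ q)
    (hbij : Set.BijOn barA {Γ | Γ.length = l} {Γ | Γ.length = l})
    (Γ0 : List (Fin n)) (hΓ0len : Γ0.length = l) (hΓ0prime : Transducer.IsPrimeWord Γ0)
    (hCprime : ∀ m : ℕ, Transducer.IsPrimeWord (barA^[m] Γ0))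
    (s : ℕ) (hs1 : 1 ≤ s)
    (r : ℕ) (hr : r < l)
    (hsrot : barA^[s] Γ0 = Transducer.rotWord r Γ0)
    (hsmin : ∀ s' : ℕ, 1 ≤ s' → s' < s → ∀ i : ℕ, i < l →
      barA^[s'] Γ0 ≠ Transducer.rotWord i Γ0) :
    (∀ Γ ∈ Set.range fun m : ℕ => barA^[m] Γ0,
      barA^[s] Γ = Transducer.rotWord r Γ ∧
      ∀ s' : ℕ, 1 ≤ s' → s' < s → ∀ i : ℕ, i < l →
        barA^[s'] Γ ≠ Transducer.rotWord i Γ) ∧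
    (∀ o : ℕ, 0 < o → l ∣ o * r → (∀ o' : ℕ, 0 < o' → l ∣ o' * r → o ≤ o') →
      (Set.range fun m : ℕ => barA^[m] Γ0).ncard = o * s) := by
  set f := barA
  have hne : ∀ w : List (Fin n), w.length = l → w ≠ [] := by
    rintro w hw rfl
    rw [List.length_nil] at hw
    omega
  have hlen : ∀ (m : ℕ) (w : List (Fin n)), w.length = l → (f^[m] w).length = l :=
    fun m w hw => hbij.mapsTo.iterate m hw
  have hinj : ∀ m : ℕ, Set.InjOn f^[m] {Γ | Γ.length = l} :=
    fun m => hbij.injOn.iterate hbij.mapsTo m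
  have hcomm1 : ∀ (i : ℕ) (w : List (Fin n)), w.length = l →
      f (w.rotate i) = (f w).rotate i := by
    intro i w hw
    have hfl : (f w).length = l := hlen 1 w hw
    have := Transducer.barA_rotate hsync hbarA w (hne w hw) (i % l)
      (by rw [hw]; exact (Nat.mod_lt _ hl).le)
    rw [← List.rotate_mod w, ← List.rotate_mod (f w), hw, hfl, this]
  have hcomm : ∀ (m i : ℕ) (w : List (Fin n)), w.length = l →
      f^[m] (w.rotate i) = (f^[m] w).rotate i := by
    intro m i w hw
    induction m with
    | zero => rfl
    | succ m ih =>
      rw [Function.iterate_succ_apply', ih, hcomm1 _ _ (hlen m w hw),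
        ← Function.iterate_succ_apply' f]
  have hcommW : ∀ (m i : ℕ), f^[m] (Transducer.rotWord i Γ0) =
      Transducer.rotWord i (f^[m] Γ0) := by
    intro m i
    rw [Transducer.rotWord_eq_rotate, Transducer.rotWord_eq_rotate, hcomm _ _ _ hΓ0len,
      hlen m _ hΓ0len, hΓ0len]
  have hrotlen : ∀ i : ℕ, (Transducer.rotWord i Γ0).length = l := by
    intro i
    rw [Transducer.rotWord_eq_rotate, List.length_rotate, hΓ0len]
  refine ⟨?_, ?_⟩
  · rintro _ ⟨m, rfl⟩
    refine ⟨?_, fun s' h1 h2 i hi heq => hsmin s' h1 h2 i hi ?_⟩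
    · change f^[s] (f^[m] Γ0) = _
      rw [← Function.iterate_add_apply, Nat.add_comm, Function.iterate_add_apply, hsrot, hcommW]
    · change f^[s'] (f^[m] Γ0) = Transducer.rotWord i (f^[m] Γ0) at heq
      rw [← Function.iterate_add_apply, Nat.add_comm, Function.iterate_add_apply,
        ← hcommW] at heq
      exact hinj m (hlen s' _ hΓ0len) (hrotlen i) heq
  · intro o ho hol homin
    have hsrot' : f^[s] Γ0 = Γ0.rotate (l - r) := by
      rw [hsrot, Transducer.rotWord_eq_rotate, hΓ0len]
    have hpow : ∀ j : ℕ, f^[s * j] Γ0 = Γ0.rotate (j * (l - r)) := by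
      intro j
      induction j with
      | zero => simp
      | succ j ih =>
        rw [Nat.mul_succ, Function.iterate_add_apply, hsrot', hcomm _ _ _ hΓ0len, ih,
          List.rotate_rotate, Nat.succ_mul]
    have hdvd : ∀ j : ℕ, l ∣ j * (l - r) ↔ l ∣ j * r := by
      intro j
      have hsum : l ∣ j * (l - r) + j * r := by
        rw [← Nat.mul_add, Nat.sub_add_cancel hr.le]
        exact Dvd.intro_left j rfl
      exact ⟨fun h => (Nat.dvd_add_right h).1 hsum, fun h => (Nat.dvd_add_left h).1 hsum⟩
    have hos : Function.IsPeriodicPt f (s * o) Γ0 := by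
      obtain ⟨c, hc⟩ := (hdvd o).2 hol
      rw [Function.IsPeriodicPt, Function.IsFixedPt, hpow, hc, ← hΓ0len, List.rotate_length_mul]
    have hospos : 0 < s * o := Nat.mul_pos hs1 ho
    have hppos := hos.minimalPeriod_pos hospos
    rw [ncard_range_iterate f Γ0 hppos, Nat.mul_comm]
    refine le_antisymm (hos.minimalPeriod_le hospos) ?_
    have hp : f^[Function.minimalPeriod f Γ0] Γ0 = Γ0 := Function.iterate_minimalPeriod
    generalize Function.minimalPeriod f Γ0 = p at hp hppos
    have hdm := Nat.div_add_mod p s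
    have hmod := Nat.mod_lt p hs1
    generalize p / s = j at hdm
    generalize p % s = t at hdm hmod
    have hrot : (f^[t] Γ0).rotate (j * (l - r)) = Γ0 := by
      rw [← hcomm _ _ _ hΓ0len, ← hpow, ← Function.iterate_add_apply, Nat.add_comm, hdm, hp]
    have ht : t = 0 := by
      by_contra ht
      -- Inverting the rotation by `a = j * (l - r)`, `f^[t] Γ0` is the rotation of `Γ0` to the
      -- right by `a % l`.
      refine hsmin t (by omega) hmod ((j * (l - r)) % l) (Nat.mod_lt _ hl) ?_
      have hm := Nat.mod_lt (j * (l - r)) hl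
      rw [← List.rotate_mod, hlen t _ hΓ0len] at hrot
      generalize (j * (l - r)) % l = a at hrot hm
      rw [Transducer.rotWord_eq_rotate, hΓ0len]
      conv_rhs => rw [← hrot]
      rw [List.rotate_rotate, Nat.add_sub_cancel' hm.le]
      conv_rhs => rw [← hlen t _ hΓ0len, List.rotate_length]
    subst ht
    have hlj : l ∣ j * r := by
      rw [← hdvd, ← hΓ0len]
      rw [← hΓ0len] at hrot
      exact hΓ0prime.dvd_of_rotate_eq hrot
    have hj : 0 < j := by
      rcases Nat.eq_zero_or_pos j with rfl | h
      · omega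
      · exact h
    rw [← hdm, Nat.add_zero]
    exact Nat.mul_le_mul_left s (homin j hj hlj)
end
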